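/- Let X be a Banach space and M, N two finite-dimensional closed subspaces of X with dim M = dim N. Define δ(M,N) = sup_{x∈M, ‖x‖=1} dist(x,N). If δ(M,N) < 1, then δ(N,M) ≤ δ(M,N) / (1 - δ(M,N)). -/

import Mathlib

open MvPolynomial

/-- an odd degree real polynomial has a root -/
lemma odd_root (p : Polynomial ℝ) (hp : Odd p.natDegree) : ∃ x, p.IsRoot x := by
  wlog hl : 0 < p.leadingCoeff generalizing p with H
  · have hne : p ≠ 0 := by rintro rfl; simp at hp
    have : p.leadingCoeff ≠ 0 := by simpa using hne
    obtain ⟨x, hx⟩ := H (-p) (by simpa using hp) (by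
      rw [Polynomial.leadingCoeff_neg]
      have := lt_of_le_of_ne (not_lt.1 hl) this
      linarith)
    exact ⟨x, by simpa [Polynomial.IsRoot] using hx⟩
  have hdeg : 0 < p.degree := Polynomial.natDegree_pos_iff_degree_pos.1 hp.pos
  have h1 := p.tendsto_atTop_of_leadingCoeff_nonneg hdeg hl.le
  have hd : (p.comp (-Polynomial.X)).natDegree = p.natDegree := by
    rw [Polynomial.natDegree_comp]; simp
  have h2 := (p.comp (-Polynomial.X)).tendsto_atBot_of_leadingCoeff_nonpos
    (by apply Polynomial.natDegree_pos_iff_degree_pos.1; rw [hd]; exact hp.pos)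
    (by rw [Polynomial.leadingCoeff_comp (by simp)]; simp [hp.neg_one_pow, hl.le])
  obtain ⟨a, ha⟩ := (h1.eventually_ge_atTop 0).exists
  obtain ⟨b, hb⟩ := (h2.eventually_le_atBot 0).exists
  simp at hb
  have := mem_range_of_exists_le_of_exists_ge (f := fun x => p.eval x) (c := 0) p.continuous ⟨_, hb⟩ ⟨_, ha⟩
  exact this

/-- a finite dimensional real commutative algebra of odd dimension has a common eigenvector -/
lemma odd_alg {B : Type*} [CommRing B] [Algebra ℝ B] [Module.Finite ℝ B]
    (hB : Odd (Module.finrank ℝ B)) : ∃ v : B, v ≠ 0 ∧ ∀ b : B, ∃ l : ℝ, b * v = l • v := by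
  classical
  let P : ℕ → Prop := fun d => Odd d ∧ ∃ I : Submodule ℝ B, (∀ b : B, ∀ x ∈ I, b * x ∈ I) ∧
    Module.finrank ℝ I = d
  have hP : ∃ d, P d := ⟨_, hB, ⊤, by simp, by simp⟩
  obtain ⟨hodd, I, hI, hId⟩ := Nat.find_spec hP
  have hmin : ∀ J : Submodule ℝ B, (∀ b : B, ∀ x ∈ J, b * x ∈ J) → Odd (Module.finrank ℝ J) →
      Module.finrank ℝ I ≤ Module.finrank ℝ J := by
    intro J hJ hJo
    rw [hId]
    exact Nat.find_min' hP ⟨hJo, J, hJ, rfl⟩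
  rw [← hId] at hodd
  have key : ∀ b : B, ∃ l : ℝ, ∀ x ∈ I, b * x = l • x := by
    intro b
    let f : Module.End ℝ I := (LinearMap.mulLeft ℝ b).restrict (fun x hx => hI b x hx)
    obtain ⟨l, hl⟩ := odd_root f.charpoly (by rwa [LinearMap.charpoly_natDegree])
    have hev : f.HasEigenvalue l := (Module.End.hasEigenvalue_iff_isRoot_charpoly f l).2 hl
    let g : I →ₗ[ℝ] B := I.subtype ∘ₗ (f - algebraMap ℝ _ l)
    have hg : ∀ x : I, g x = b * x - l • (x : B) := by
      intro x; rfl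
    obtain ⟨w, hw⟩ := hev.exists_hasEigenvector
    have hgw : g w = 0 := by
      rw [hg]; have h3 : b * (w : B) = l • (w : B) := congrArg Subtype.val hw.apply_eq_smul
      rw [h3, sub_self]
    have hsum := g.finrank_range_add_finrank_ker
    refine ⟨l, ?_⟩
    have hker : Module.finrank ℝ ((LinearMap.ker g).map I.subtype) = Module.finrank ℝ (LinearMap.ker g) :=
      Submodule.finrank_map_subtype_eq _ _
    have hinv : ∀ c : B, ∀ x ∈ (LinearMap.ker g).map I.subtype, c * x ∈ (LinearMap.ker g).map I.subtype := by
      rintro c _ ⟨x, hx, rfl⟩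
      refine ⟨⟨c * x, hI c x x.2⟩, ?_, rfl⟩
      have hx : g x = 0 := hx
      show g _ = 0
      rw [hg] at hx ⊢
      have : b * (c * x) - l • (c * (x:B)) = c * (b * x - l • (x:B)) := by
        rw [mul_sub, mul_smul_comm]; ring
      simp only [this, hx, mul_zero]
    have hinv2 : ∀ c : B, ∀ x ∈ LinearMap.range g, c * x ∈ LinearMap.range g := by
      rintro c _ ⟨x, rfl⟩
      refine ⟨⟨c * x, hI c x x.2⟩, ?_⟩
      rw [hg, hg, mul_sub, mul_smul_comm]
      simp only
      ring
    rcases Nat.even_or_odd (Module.finrank ℝ (LinearMap.ker g)) with he | ho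
    · exfalso
      have ho : Odd (Module.finrank ℝ (LinearMap.range g)) := by
        rw [← hsum] at hodd
        exact (Nat.odd_add.1 hodd).2 he
      have h0 : Module.finrank ℝ (LinearMap.ker g) = 0 := by
        have := hmin _ hinv2 ho; omega
      rw [Submodule.finrank_eq_zero] at h0
      have : w ∈ LinearMap.ker g := hgw
      rw [h0] at this
      exact hw.2 (by simpa using this)
    · have h1 := hmin _ hinv (by rwa [hker])
      rw [hker] at h1
      have : LinearMap.ker g = ⊤ := Submodule.eq_top_of_finrank_eq (le_antisymm (Submodule.finrank_le _) h1)
      intro x hx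
      have : (⟨x, hx⟩ : I) ∈ LinearMap.ker g := by rw [this]; trivial
      have h2 : g ⟨x, hx⟩ = 0 := this
      rw [hg] at h2
      exact sub_eq_zero.1 h2
  have : I ≠ ⊥ := by
    rintro rfl; simp at hodd
  obtain ⟨v, hv, hv0⟩ := Submodule.exists_mem_ne_zero_of_ne_bot this
  exact ⟨v, hv0, fun b => (key b).imp fun l h => h v hv⟩

lemma Vmap {σ N : Type*} [AddCommGroup N] [Module ℝ N] (f : MvPolynomial σ ℝ →ₗ[ℝ] N)
    (S : Submodule ℝ N) (e : ℕ) (h : ∀ c : σ →₀ ℕ, c.degree ≤ e → f (monomial c 1) ∈ S)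
    (p : MvPolynomial σ ℝ) (hp : p ∈ restrictTotalDegree σ ℝ e) : f p ∈ S := by
  rw [mem_restrictTotalDegree] at hp
  rw [p.as_sum, map_sum]
  refine Submodule.sum_mem _ fun c hc => ?_
  have : monomial c (coeff c p) = coeff c p • monomial c (1:ℝ) := by simp [smul_monomial]
  rw [this, map_smul]
  exact S.smul_mem _ (h c ((le_totalDegree hc).trans hp))

lemma mon_deg {σ : Type*} (c : σ →₀ ℕ) : (monomial c (1:ℝ)).totalDegree = c.degree :=
  totalDegree_monomial _ one_ne_zero

section
variable {σ : Type*} [Fintype σ] [DecidableEq σ] (D : ℕ)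

/-- reduction operator -/
noncomputable def Qop (p : σ → MvPolynomial σ ℝ) : MvPolynomial σ ℝ →ₗ[ℝ] MvPolynomial σ ℝ :=
  open Classical in
  (basisMonomials σ ℝ).constr ℝ (fun c => if h : ∃ i, D ≤ c i then
    monomial (c - Finsupp.single h.choose D) 1 * p h.choose else 0)

/-- substitution operator -/
noncomputable def Psi (G : σ → MvPolynomial σ ℝ) : MvPolynomial σ ℝ →ₗ[ℝ] MvPolynomial σ ℝ :=
  (basisMonomials σ ℝ).constr ℝ (fun c =>
    monomial (c.mapRange (· % D) (Nat.zero_mod D)) 1 * ∏ i, G i ^ (c i / D))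

lemma Qop_mon (p : σ → MvPolynomial σ ℝ) (c : σ →₀ ℕ) :
    ((∀ i, c i < D) ∧ Qop D p (monomial c 1) = 0) ∨
    ∃ i, D ≤ c i ∧ Qop D p (monomial c 1) = monomial (c - Finsupp.single i D) 1 * p i := by
  classical
  have this := (basisMonomials σ ℝ).constr_basis ℝ (fun c : σ →₀ ℕ => if h : ∃ i, D ≤ c i then
    monomial (c - Finsupp.single h.choose D) 1 * p h.choose else 0) c
  rw [coe_basisMonomials] at this
  change Qop D p (monomial c 1) = _ at this
  by_cases h : ∃ i, D ≤ c i
  · rw [dif_pos h] at this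
    exact Or.inr ⟨_, h.choose_spec, this⟩
  · rw [dif_neg h] at this
    exact Or.inl ⟨by simpa using h, this⟩

lemma Psi_mon (G : σ → MvPolynomial σ ℝ) (c : σ →₀ ℕ) : Psi D G (monomial c 1) =
    monomial (c.mapRange (· % D) (Nat.zero_mod D)) 1 * ∏ i, G i ^ (c i / D) := by
  have this := (basisMonomials σ ℝ).constr_basis ℝ (fun c : σ →₀ ℕ =>
    monomial (c.mapRange (· % D) (Nat.zero_mod D)) (1 : ℝ) * ∏ i, G i ^ (c i / D)) c
  rw [coe_basisMonomials] at this
  exact this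

lemma deg_split (c : σ →₀ ℕ) (i : σ) (h : D ≤ c i) :
    (c - Finsupp.single i D) + Finsupp.single i D = c ∧ (c - Finsupp.single i D).degree + D = c.degree := by
  have h1 : (c - Finsupp.single i D) + Finsupp.single i D = c :=
    tsub_add_cancel_of_le (by simpa using h)
  refine ⟨h1, ?_⟩
  conv_rhs => rw [← h1]
  rw [map_add]; simp

lemma Qop_deg (p : σ → MvPolynomial σ ℝ) (hp : ∀ i, (p i).totalDegree ≤ D) (e : ℕ)
    (q : MvPolynomial σ ℝ) (hq : q ∈ restrictTotalDegree σ ℝ e) :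
    Qop D p q ∈ restrictTotalDegree σ ℝ e := by
  refine Vmap _ _ e (fun c hc => ?_) q hq
  rcases Qop_mon D p c with ⟨_, h⟩ | ⟨i, hi, h⟩
  · rw [h]; exact zero_mem _
  · rw [h, mem_restrictTotalDegree]
    refine (totalDegree_mul _ _).trans ?_
    rw [mon_deg]
    have := (deg_split D c i hi).2
    have := hp i
    omega

lemma Psi_mul (hD : 0 < D) (G : σ → MvPolynomial σ ℝ) (i : σ) (q : MvPolynomial σ ℝ) :
    Psi D G (monomial (Finsupp.single i D) 1 * q) = G i * Psi D G q := by
  have : Psi D G ∘ₗ LinearMap.mulLeft ℝ (monomial (Finsupp.single i D) (1:ℝ)) =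
      LinearMap.mulLeft ℝ (G i) ∘ₗ Psi D G := by
    refine (basisMonomials σ ℝ).ext fun c => ?_
    simp only [coe_basisMonomials, LinearMap.comp_apply, LinearMap.mulLeft_apply, monomial_mul, mul_one]
    rw [Psi_mon, Psi_mon]
    have h1 : (Finsupp.single i D + c).mapRange (· % D) (Nat.zero_mod D)
        = c.mapRange (· % D) (Nat.zero_mod D) := by
      ext j
      by_cases h : i = j
      · subst h; simp
      · simp [Finsupp.single_apply, h]
    have h2 : ∀ j, G j ^ ((Finsupp.single i D + c) j / D) = (if j = i then G i else 1) * G j ^ (c j / D) := by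
      intro j
      by_cases h : j = i
      · subst h; simp [Nat.add_div_left _ hD, pow_succ']
      · simp [Finsupp.single_apply, h, Ne.symm h]
    rw [h1, Finset.prod_congr rfl fun j _ => h2 j, Finset.prod_mul_distrib]
    simp
    ring
  exact LinearMap.congr_fun this q

lemma Psi_deg (G : σ → MvPolynomial σ ℝ) (hG : ∀ i, (G i).totalDegree ≤ D) (e : ℕ)
    (q : MvPolynomial σ ℝ) (hq : q ∈ restrictTotalDegree σ ℝ e) :
    Psi D G q ∈ restrictTotalDegree σ ℝ e := by
  refine Vmap _ _ e (fun c hc => ?_) q hq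
  rw [Psi_mon, mem_restrictTotalDegree]
  refine (totalDegree_mul _ _).trans (le_trans ?_ hc)
  rw [mon_deg, Finsupp.degree_eq_sum, Finsupp.degree_eq_sum]
  calc _ ≤ ∑ i, c i % D + ∑ i, (c i / D) * D := by
        gcongr
        · simp
        · refine (totalDegree_finsetProd _ _).trans (Finset.sum_le_sum fun i _ => ?_)
          refine (totalDegree_pow _ _).trans ?_
          gcongr
          exact hG i
    _ = _ := by
        rw [← Finset.sum_add_distrib]
        exact Finset.sum_congr rfl fun i _ => by rw [mul_comm]; exact Nat.mod_add_div _ _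

/-- The exceptional set -/
lemma bad_countable (p : σ → MvPolynomial σ ℝ) (hp : ∀ i, (p i).totalDegree ≤ D) :
    {t : ℝ | ∃ q, q ≠ 0 ∧ t • q + Qop D p q = 0}.Countable := by
  let f : (e : ℕ) → Module.End ℝ (restrictTotalDegree σ ℝ e) := fun e =>
    (Qop D p).restrict (Qop_deg D p hp e)
  have : {t : ℝ | ∃ q, q ≠ 0 ∧ t • q + Qop D p q = 0} ⊆
      ⋃ e, (fun t => -t) '' {t | (f e).HasEigenvalue t} := by
    rintro t ⟨q, hq, h⟩
    refine Set.mem_iUnion.2 ⟨q.totalDegree, -t, ?_, by simp⟩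
    refine Module.End.hasEigenvalue_of_hasEigenvector
      (x := ⟨q, (mem_restrictTotalDegree _ _ _).2 le_rfl⟩) ⟨Module.End.mem_eigenspace_iff.2 ?_, ?_⟩
    · apply Subtype.ext
      show Qop D p q = -t • q
      rw [neg_smul]; exact eq_neg_of_add_eq_zero_right h
    · intro h; exact hq (congrArg Subtype.val h)
  refine Set.Countable.mono this (Set.countable_iUnion fun e => ?_)
  exact ((Module.End.finite_hasEigenvalue (f e)).countable).image _

lemma Psi_surj (hD : 0 < D) (p : σ → MvPolynomial σ ℝ) (hp : ∀ i, (p i).totalDegree ≤ D) (t : ℝ)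
    (ht : ¬ ∃ q, q ≠ 0 ∧ t • q + Qop D p q = 0) (e : ℕ) :
    restrictTotalDegree σ ℝ e ≤ (restrictTotalDegree σ ℝ e).map
      (Psi D (fun i => monomial (Finsupp.single i D) t + p i)) := by
  induction e using Nat.strong_induction_on with
  | _ e ih =>
  let T : Module.End ℝ (restrictTotalDegree σ ℝ e) :=
    t • 1 + (Qop D p).restrict (Qop_deg D p hp e)
  have hT : Function.Surjective T := by
    rw [← LinearMap.injective_iff_surjective, injective_iff_map_eq_zero]
    intro a ha
    by_contra hne
    refine ht ⟨a, by simpa using hne, ?_⟩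
    exact congrArg Subtype.val ha
  intro q hq
  obtain ⟨r, hr⟩ := hT ⟨q, hq⟩
  have hr : (t • (LinearMap.id : MvPolynomial σ ℝ →ₗ[ℝ] MvPolynomial σ ℝ) + Qop D p) (r : MvPolynomial σ ℝ) = q := congrArg Subtype.val hr
  rw [← hr]
  refine Vmap (t • (LinearMap.id : MvPolynomial σ ℝ →ₗ[ℝ] MvPolynomial σ ℝ) + Qop D p) _ e (fun c hc => ?_) (r : MvPolynomial σ ℝ) r.2
  have hmem : monomial c (1:ℝ) ∈ restrictTotalDegree σ ℝ e := by
    rw [mem_restrictTotalDegree, mon_deg]; exact hc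
  rcases Qop_mon D p c with ⟨hi, h⟩ | ⟨i, hi, h⟩
  · refine ⟨t • monomial c 1, Submodule.smul_mem _ _ hmem, ?_⟩
    rw [map_smul, Psi_mon]
    have h1 : c.mapRange (· % D) (Nat.zero_mod D) = c := by
      ext j; simp [Nat.mod_eq_of_lt (hi j)]
    have h2 : ∀ j, c j / D = 0 := fun j => Nat.div_eq_of_lt (hi j)
    simp [h1, h2, h]
  · obtain ⟨h1, h2⟩ := deg_split D c i hi
    obtain ⟨r', hr', h3⟩ := ih (e - D) (by omega) (x := monomial (c - Finsupp.single i D) (1:ℝ)) (by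
      rw [mem_restrictTotalDegree, mon_deg]; omega)
    refine ⟨monomial (Finsupp.single i D) 1 * r', ?_, ?_⟩
    · rw [SetLike.mem_coe, mem_restrictTotalDegree] at *
      refine (totalDegree_mul _ _).trans ?_
      rw [mon_deg]
      simp
      omega
    · rw [Psi_mul D hD, h3]
      simp only [LinearMap.add_apply, LinearMap.smul_apply, LinearMap.id_apply, h]
      rw [add_mul, monomial_mul, add_comm (Finsupp.single i D), h1, smul_monomial]
      simp [mul_comm]

lemma Psi_bij (hD : 0 < D) (p : σ → MvPolynomial σ ℝ) (hp : ∀ i, (p i).totalDegree ≤ D) (t : ℝ)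
    (ht : ¬ ∃ q, q ≠ 0 ∧ t • q + Qop D p q = 0) :
    Function.Bijective (Psi D (fun i => monomial (Finsupp.single i D) t + p i)) := by
  set G := (fun i => monomial (Finsupp.single i D) t + p i) with hG
  have hGd : ∀ i, (G i).totalDegree ≤ D := by
    intro i
    refine (totalDegree_add _ _).trans (max_le ?_ (hp i))
    refine (totalDegree_monomial_le _ _).trans ?_
    simp
  constructor
  · rw [injective_iff_map_eq_zero]
    intro a ha
    let e := a.totalDegree
    let f : Module.End ℝ (restrictTotalDegree σ ℝ e) := (Psi D G).restrict (Psi_deg D G hGd e)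
    have hs : Function.Surjective f := by
      rintro ⟨q, hq⟩
      obtain ⟨r, hr, h⟩ := Psi_surj D hD p hp t ht e hq
      exact ⟨⟨r, hr⟩, Subtype.ext h⟩
    have hi := LinearMap.injective_iff_surjective.2 hs
    have : (⟨a, (mem_restrictTotalDegree _ _ _).2 le_rfl⟩ : restrictTotalDegree σ ℝ e) = 0 := by
      apply hi
      apply Subtype.ext
      rw [map_zero]
      exact ha
    exact congrArg Subtype.val this
  · intro q
    obtain ⟨r, hr, h⟩ := Psi_surj D hD p hp t ht q.totalDegree
      ((mem_restrictTotalDegree _ _ _).2 le_rfl)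
    exact ⟨r, h⟩

lemma alg_zero (hD : Odd D) (p : σ → MvPolynomial σ ℝ) (hp : ∀ i, (p i).totalDegree ≤ D) (t : ℝ)
    (ht : ¬ ∃ q, q ≠ 0 ∧ t • q + Qop D p q = 0) :
    ∃ x : σ → ℝ, ∀ i, t * x i ^ D + eval x (p i) = 0 := by
  have hbij := Psi_bij D hD.pos p hp t ht
  set G := (fun i => monomial (Finsupp.single i D) t + p i) with hG
  let E := LinearEquiv.ofBijective (Psi D G) hbij
  let toF : (σ → Fin D) → (σ →₀ ℕ) := fun a => Finsupp.equivFunOnFinite.symm (fun i => (a i : ℕ))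
  have toF_inj : Function.Injective toF := by
    intro a b h
    funext i
    exact Fin.ext (DFunLike.congr_fun h i)
  let π : MvPolynomial σ ℝ →ₗ[ℝ] ((σ → Fin D) → ℝ) := LinearMap.pi fun a => lcoeff ℝ (toF a)
  have hπ : Function.Surjective π := by
    intro w
    refine ⟨∑ a, monomial (toF a) (w a), ?_⟩
    funext b
    show coeff (toF b) _ = _
    rw [coeff_sum]
    simp [coeff_monomial, toF_inj.eq_iff]
  let L : MvPolynomial σ ℝ →ₗ[ℝ] ((σ → Fin D) → ℝ) := π ∘ₗ E.symm.toLinearMap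
  have hL : Function.Surjective L := hπ.comp E.symm.surjective
  let I : Ideal (MvPolynomial σ ℝ) := Ideal.span (Set.range G)
  have hker : LinearMap.ker L = I.restrictScalars ℝ := by
    apply le_antisymm
    · intro q hq
      obtain ⟨r, rfl⟩ := E.surjective q
      have hq : π r = 0 := by simpa [L] using hq
      show Psi D G r ∈ I
      rw [r.as_sum, map_sum]
      refine Ideal.sum_mem _ fun c hc => ?_
      have hc' : ∃ i, D ≤ c i := by
        by_contra hcon
        push Not at hcon
        have := congrFun hq (fun i => ⟨c i, hcon i⟩)
        have h2 : coeff c r = 0 := by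
          have h3 : toF (fun i => ⟨c i, hcon i⟩) = c := by ext i; rfl
          have h4 : coeff (toF (fun i => ⟨c i, hcon i⟩)) r = 0 := this
          rwa [h3] at h4
        exact (mem_support_iff.1 hc) h2
      obtain ⟨i, hi⟩ := hc'
      have : monomial c (coeff c r) = monomial (Finsupp.single i D) 1 * monomial (c - Finsupp.single i D) (coeff c r) := by
        rw [monomial_mul, add_comm, (deg_split D c i hi).1, one_mul]
      rw [this, Psi_mul D hD.pos]
      exact Ideal.mul_mem_right _ _ (Ideal.subset_span ⟨i, rfl⟩)
    · intro q hq
      have hq : q ∈ I := hq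
      obtain ⟨a, rfl⟩ := Ideal.mem_span_range_iff_exists_fun.1 hq
      refine Submodule.sum_mem _ fun i _ => ?_
      obtain ⟨r, hr⟩ := E.surjective (a i)
      have h1 : a i * G i = E (monomial (Finsupp.single i D) 1 * r) := by
        rw [← hr, mul_comm]
        exact (Psi_mul D hD.pos G i r).symm
      rw [LinearMap.mem_ker, h1]
      simp only [L, LinearMap.comp_apply, LinearEquiv.coe_coe, LinearEquiv.symm_apply_apply]
      funext b
      show coeff (toF b) _ = 0
      rw [coeff_monomial_mul', if_neg]
      intro h
      have h2 := h i
      simp only [Finsupp.single_eq_same] at h2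
      exact absurd h2 (not_le.2 (b i).2)
  have e1 : (MvPolynomial σ ℝ ⧸ I) ≃ₗ[ℝ] ((σ → Fin D) → ℝ) :=
    (Submodule.Quotient.restrictScalarsEquiv ℝ I).symm ≪≫ₗ
      (Submodule.quotEquivOfEq _ _ hker.symm) ≪≫ₗ L.quotKerEquivOfSurjective hL
  have : Module.Finite ℝ (MvPolynomial σ ℝ ⧸ I) := Module.Finite.equiv e1.symm
  obtain ⟨v, hv, h⟩ := odd_alg (B := MvPolynomial σ ℝ ⧸ I) (by
    rw [e1.finrank_eq]; simp [hD.pow])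
  choose l hl using fun i => h (Ideal.Quotient.mk I (X i))
  have key : ∀ q : MvPolynomial σ ℝ, Ideal.Quotient.mk I q * v = eval l q • v := by
    intro q
    induction q using MvPolynomial.induction_on with
    | C a => 
      rw [eval_C]
      exact (Algebra.smul_def (A := MvPolynomial σ ℝ ⧸ I) a v).symm
    | add a b ha hb => rw [map_add, map_add, add_mul, ha, hb, add_smul]
    | mul_X a i ha => rw [map_mul, map_mul, eval_X, mul_assoc, hl, mul_smul_comm, ha, smul_smul, mul_comm]
  refine ⟨l, fun i => ?_⟩
  have h1 := key (G i)
  have hGi : G i ∈ I := Ideal.subset_span ⟨i, rfl⟩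
  rw [Ideal.Quotient.eq_zero_iff_mem.2 hGi, zero_mul] at h1
  have h2 := (smul_eq_zero.1 h1.symm).resolve_right hv
  simpa [hG, eval_monomial] using h2
end

lemma eval_smul_hom {σ : Type*} {H : MvPolynomial σ ℝ} {D : ℕ} (hH : H.IsHomogeneous D)
    (r : ℝ) (v : σ → ℝ) : eval (r • v) H = r ^ D * eval v H := by
  rw [eval_eq, eval_eq, Finset.mul_sum]
  refine Finset.sum_congr rfl fun d hd => ?_
  have h1 : d.degree = D := by
    by_contra h
    exact (mem_support_iff.1 hd) (hH.coeff_eq_zero h)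
  simp only [Pi.smul_apply, smul_eq_mul, mul_pow, Finset.prod_mul_distrib, Finset.prod_pow_eq_pow_sum]
  have : ∑ i ∈ d.support, d i = D := h1
  rw [this]; ring

/-- Homogeneous version: forms of odd degree almost vanish somewhere on the sphere. -/
lemma hom_zero {n : ℕ} (D : ℕ) (hD : Odd D) (H : Fin n → MvPolynomial (Fin (n+1)) ℝ)
    (hH : ∀ i, (H i).IsHomogeneous D) (ε : ℝ) (hε : 0 < ε) :
    ∃ u : Fin (n+1) → ℝ, ∑ i, u i ^ 2 = 1 ∧ ∀ i, |eval u (H i)| ≤ ε := by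
  let s : Fin (n+1) → MvPolynomial (Fin n) ℝ := Fin.cons 1 X
  let p : Fin n → MvPolynomial (Fin n) ℝ := fun i => aeval s (H i)
  have hs : ∀ j, (s j).totalDegree ≤ 1 := by
    intro j
    refine Fin.cases ?_ (fun i => ?_) j
    · simp [s]
    · simp [s]
  have hp : ∀ i, (p i).totalDegree ≤ D := by
    intro i
    simp only [p, aeval_def, eval₂_eq]
    refine totalDegree_finsetSum_le fun d hd => ?_
    have h1 : d.degree = D := by
      by_contra h
      exact (mem_support_iff.1 hd) ((hH i).coeff_eq_zero h)
    refine (totalDegree_mul _ _).trans ?_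
    have h0 : (algebraMap ℝ (MvPolynomial (Fin n) ℝ) (coeff d (H i))).totalDegree = 0 := totalDegree_C _
    rw [h0, zero_add]
    refine (totalDegree_finsetProd _ _).trans ?_
    have h2 : ∑ j ∈ d.support, d j = D := h1
    rw [← h2]
    refine Finset.sum_le_sum fun j _ => (totalDegree_pow _ _).trans ?_
    exact (Nat.mul_le_mul_left _ (hs j)).trans (by simp)
  obtain ⟨t, ht, ht0, htε⟩ := (bad_countable D p hp).dense_compl ℝ |>.exists_between hε
  obtain ⟨x, hx⟩ := alg_zero D hD p hp t ht
  let v : Fin (n+1) → ℝ := Fin.cons 1 x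
  have hv : ∀ i, eval x (p i) = eval v (H i) := by
    intro i
    simp only [p]
    rw [← coe_aeval_eq_eval, ← coe_aeval_eq_eval]
    show (aeval x) ((aeval s) (H i)) = aeval v (H i)
    rw [← AlgHom.comp_apply, comp_aeval]
    congr 2
    funext j
    refine Fin.cases ?_ (fun i => ?_) j
    · simp [s, v]
    · simp [s, v]
  have hpos : 0 < ∑ i, v i ^ 2 := by
    rw [Fin.sum_univ_succ]
    have : 0 ≤ ∑ i : Fin n, v i.succ ^ 2 := Finset.sum_nonneg fun i _ => sq_nonneg _
    simp only [v, Fin.cons_zero] at this ⊢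
    linarith
  set R := √(∑ i, v i ^ 2) with hR
  have hRpos : 0 < R := Real.sqrt_pos.2 hpos
  have hR2 : R ^ 2 = ∑ i, v i ^ 2 := Real.sq_sqrt hpos.le
  have hu : ∑ i, (R⁻¹ • v) i ^ 2 = 1 := by
    simp only [Pi.smul_apply, smul_eq_mul, mul_pow, ← Finset.mul_sum, ← hR2]
    field_simp
  refine ⟨R⁻¹ • v, hu, fun i => ?_⟩
  have h1 : t * ((R⁻¹ • v) i.succ) ^ D + eval (R⁻¹ • v) (H i) = 0 := by
    rw [eval_smul_hom (hH i), ← hv, Pi.smul_apply, smul_eq_mul, mul_pow]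
    have := hx i
    have h3 : v i.succ = x i := by simp [v]
    rw [h3]
    linear_combination (R⁻¹ ^ D) * this
  have h2 : |(R⁻¹ • v) i.succ| ≤ 1 := by
    rw [← sq_le_one_iff_abs_le_one, ← hu]
    exact Finset.single_le_sum (f := fun i => (R⁻¹ • v) i ^ 2) (fun i _ => sq_nonneg _) (Finset.mem_univ _)
  have h3 : eval (R⁻¹ • v) (H i) = - (t * ((R⁻¹ • v) i.succ) ^ D) := by linarith
  rw [h3, abs_neg, abs_mul, abs_pow, abs_of_pos ht0]
  calc _ ≤ t * 1 := by gcongr; exact pow_le_one₀ (abs_nonneg _) h2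
    _ ≤ ε := by linarith

/-- Odd part of a polynomial, homogenized on the sphere. -/
lemma homogenize {m : ℕ} (P : MvPolynomial (Fin m) ℝ) (k : ℕ) (hk : P.totalDegree ≤ 2 * k + 1) :
    ∃ H : MvPolynomial (Fin m) ℝ, H.IsHomogeneous (2 * k + 1) ∧
      ∀ u : Fin m → ℝ, ∑ i, u i ^ 2 = 1 → eval u P - eval (-u) P = 2 * eval u H := by
  let N : MvPolynomial (Fin m) ℝ := ∑ i, X i ^ 2
  have hN : N.IsHomogeneous 2 := IsHomogeneous.sum _ _ _ fun i _ => isHomogeneous_X_pow _ _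
  refine ⟨∑ j ∈ Finset.range (k+1), N ^ (k - j) * homogeneousComponent (2*j+1) P, ?_, ?_⟩
  · refine IsHomogeneous.sum _ _ _ fun j hj => ?_
    have := (hN.pow (k-j)).mul (homogeneousComponent_isHomogeneous (2*j+1) P)
    convert this using 1
    have := Finset.mem_range.1 hj
    omega
  · intro u hu
    have hP : P = ∑ i ∈ Finset.range (2 * (k+1)), homogeneousComponent i P := by
      conv_lhs => rw [← sum_homogeneousComponent P]
      refine Finset.sum_subset (by intro a; simp; omega) ?_
      intro a _ ha
      apply homogeneousComponent_eq_zero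
      simp at ha; omega
    have hneg : -u = (-1 : ℝ) • u := by simp
    have hNu : eval u N = 1 := by simp [N, hu]
    have key : ∀ l, eval u (∑ i ∈ Finset.range (2 * l), homogeneousComponent i P)
        - eval (-u) (∑ i ∈ Finset.range (2 * l), homogeneousComponent i P) =
        2 * ∑ j ∈ Finset.range l, eval u (homogeneousComponent (2*j+1) P) := by
      intro l
      induction l with
      | zero => simp
      | succ l ih =>
        rw [show 2 * (l+1) = 2 * l + 1 + 1 by ring, Finset.sum_range_succ, Finset.sum_range_succ,
          Finset.sum_range_succ]
        simp only [map_add]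
        have e1 := eval_smul_hom (homogeneousComponent_isHomogeneous (2*l+1) P) (-1) u
        have e2 := eval_smul_hom (homogeneousComponent_isHomogeneous (2*l) P) (-1) u
        rw [← hneg] at e1 e2
        rw [e1, e2]
        simp only [pow_succ, pow_mul]
        simp only [map_sum] at ih ⊢
        norm_num
        linarith
    conv_lhs => rw [hP]
    rw [key]
    simp [hNu]

lemma poly_dense {m : ℕ} (K : Set (Fin m → ℝ)) (hK : IsCompact K) (g : (Fin m → ℝ) → ℝ)
    (hg : Continuous g) (ε : ℝ) (hε : 0 < ε) :
    ∃ P : MvPolynomial (Fin m) ℝ, ∀ u ∈ K, |eval u P - g u| < ε := by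
  have : CompactSpace K := isCompact_iff_compactSpace.1 hK
  let φ : MvPolynomial (Fin m) ℝ →ₐ[ℝ] C(K, ℝ) :=
    aeval (fun i => ⟨fun u => u.1 i, (continuous_apply i).comp continuous_subtype_val⟩)
  have hφ : ∀ P (u : K), φ P u = eval u.1 P := by
    intro P u
    induction P using MvPolynomial.induction_on with
    | C a => simp [φ]
    | add a b ha hb => simp [ha, hb]
    | mul_X a i ha => simp [ha]; simp [φ]
  obtain ⟨⟨q, P, hq⟩, h⟩ := ContinuousMap.exists_mem_subalgebra_near_continuousMap_of_separatesPoints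
    φ.range (by
      intro x y hxy
      obtain ⟨i, hi⟩ := Function.ne_iff.1 (fun h => hxy (Subtype.ext h))
      refine ⟨_, ⟨φ (X i), ⟨X i, rfl⟩, rfl⟩, ?_⟩
      simpa [hφ] using hi) ⟨fun u => g u.1, by fun_prop⟩ ε hε
  refine ⟨P, fun u hu => ?_⟩
  rw [ContinuousMap.norm_lt_iff _ hε] at h
  have := h ⟨u, hu⟩
  rw [← hφ P ⟨u, hu⟩]
  have hq : φ P = q := hq
  rw [hq]
  simpa using this

lemma sphere_compact (m : ℕ) : IsCompact {u : Fin m → ℝ | ∑ i, u i ^ 2 = 1} := by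
  apply Metric.isCompact_of_isClosed_isBounded
  · exact isClosed_eq (by fun_prop) continuous_const
  · refine (Metric.isBounded_closedBall (x := (0 : Fin m → ℝ)) (r := 1)).subset ?_
    intro u hu
    rw [mem_closedBall_zero_iff, pi_norm_le_iff_of_nonneg zero_le_one]
    intro i
    rw [Real.norm_eq_abs, ← sq_le_one_iff_abs_le_one, ← (show ∑ i, u i ^ 2 = 1 from hu)]
    exact Finset.single_le_sum (f := fun i => u i ^ 2) (fun i _ => sq_nonneg _) (Finset.mem_univ _)

/-- Borsuk-Ulam -/
lemma borsuk_ulam {n : ℕ} (g : (Fin (n+1) → ℝ) → (Fin n → ℝ)) (hg : Continuous g) :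
    ∃ u : Fin (n+1) → ℝ, ∑ i, u i ^ 2 = 1 ∧ g u = g (-u) := by
  have hK := sphere_compact (n+1)
  have happ : ∀ ε > 0, ∃ u : Fin (n+1) → ℝ, ∑ i, u i ^ 2 = 1 ∧ ‖g u - g (-u)‖ ≤ 4 * ε := by
    intro ε hε
    choose P hP using fun i => poly_dense _ hK (fun u => g u i) (by fun_prop) ε hε
    let k := ∑ i, (P i).totalDegree
    choose H hH hHe using fun i => homogenize (P i) k (by
      have : (P i).totalDegree ≤ k :=
        Finset.single_le_sum (f := fun i => (P i).totalDegree) (fun i _ => Nat.zero_le _) (Finset.mem_univ i)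
      omega)
    obtain ⟨u, hu, h⟩ := hom_zero (2*k+1) ⟨k, rfl⟩ H hH ε hε
    refine ⟨u, hu, ?_⟩
    rw [pi_norm_le_iff_of_nonneg (by positivity)]
    intro i
    have h1 := abs_lt.1 (hP i u hu)
    have h2 := abs_lt.1 (hP i (-u) (by simpa using hu))
    have h3 := hHe i u hu
    have h4 := abs_le.1 (h i)
    rw [Real.norm_eq_abs, abs_le, Pi.sub_apply]
    constructor <;> linarith
  obtain ⟨u0, hu0, _⟩ := happ 1 one_pos
  obtain ⟨u, hu, hmin⟩ := hK.exists_isMinOn ⟨u0, hu0⟩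
    (f := fun u => ‖g u - g (-u)‖) (by fun_prop)
  refine ⟨u, hu, ?_⟩
  by_contra hne
  have hpos : 0 < ‖g u - g (-u)‖ := norm_pos_iff.2 (sub_ne_zero.2 hne)
  obtain ⟨w, hw, h⟩ := happ (‖g u - g (-u)‖ / 8) (by positivity)
  have : ‖g u - g (-u)‖ ≤ ‖g w - g (-w)‖ := hmin hw
  linarith

lemma kkm {X : Type*} [NormedAddCommGroup X] [NormedSpace ℝ X]
    (M N : Submodule ℝ X) [FiniteDimensional ℝ M] [FiniteDimensional ℝ N]
    (hdim : Module.finrank ℝ N < Module.finrank ℝ M) :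
    ∃ x ∈ M, ‖x‖ = 1 ∧ ∀ y ∈ N, 1 ≤ ‖x - y‖ := by
  by_contra! hcon
  let m := Module.finrank ℝ M - 1
  have hm : Module.finrank ℝ (Fin (m+1) → ℝ) = Module.finrank ℝ M := by simp; omega
  let e : (Fin (m+1) → ℝ) ≃L[ℝ] M := ContinuousLinearEquiv.ofFinrankEq hm
  have hN : Module.finrank ℝ N ≤ m := by omega
  obtain ⟨j, hj⟩ : ∃ j : N →ₗ[ℝ] (Fin m → ℝ), Function.Injective j := by
    refine ⟨Function.ExtendByZero.linearMap ℝ (Fin.castLE hN) ∘ₗ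
      (Module.finBasis ℝ N).equivFun.toLinearMap, ?_⟩
    intro a b hab
    apply (Module.finBasis ℝ N).equivFun.injective
    funext i
    have h1 : Function.extend (Fin.castLE hN) ((Module.finBasis ℝ N).equivFun a) 0 (Fin.castLE hN i) =
      Function.extend (Fin.castLE hN) ((Module.finBasis ℝ N).equivFun b) 0 (Fin.castLE hN i) :=
      congrFun hab (Fin.castLE hN i)
    rwa [(Fin.castLE_injective hN).extend_apply, (Fin.castLE_injective hN).extend_apply] at h1
  let K := {u : Fin (m+1) → ℝ | ∑ i, u i ^ 2 = 1}
  have hK : IsClosed K := (sphere_compact (m+1)).isClosed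
  have hK0 : ∀ v ∈ K, (e v : X) ≠ 0 := by
    intro v hv h
    have : v = 0 := by
      apply e.injective; apply Subtype.ext; simpa using h
    subst this
    simp [K] at hv
  let T : (Fin (m+1) → ℝ) → Set N := fun v => {w | v ∈ K → ‖(e v : X) - w‖ < ‖(e v : X)‖}
  obtain ⟨g, hg⟩ := exists_continuous_forall_mem_convex_of_local_const (t := T) (by
    intro v
    by_cases hv : v ∈ K
    · have : T v = N.subtype ⁻¹' Metric.ball (e v : X) ‖(e v : X)‖ := by
        ext w; simp [T, hv, dist_eq_norm, norm_sub_rev]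
      rw [this]
      exact (convex_ball _ _).linear_preimage _
    · have : T v = Set.univ := by ext w; simp [T, hv]
      rw [this]; exact convex_univ) (by
    intro v
    by_cases hv : v ∈ K
    · have h0 := norm_pos_iff.2 (hK0 v hv)
      obtain ⟨y, hy, h⟩ := hcon (‖(e v : X)‖⁻¹ • (e v : X)) (M.smul_mem _ (e v).2) (by
        rw [norm_smul, norm_inv, norm_norm, inv_mul_cancel₀ h0.ne'])
      refine ⟨⟨‖(e v : X)‖ • y, N.smul_mem _ hy⟩, ?_⟩
      have hlt : ‖(e v : X) - ‖(e v : X)‖ • y‖ < ‖(e v : X)‖ := by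
        have : (e v : X) - ‖(e v : X)‖ • y = ‖(e v : X)‖ • (‖(e v : X)‖⁻¹ • (e v : X) - y) := by
          rw [smul_sub, smul_smul, mul_inv_cancel₀ h0.ne', one_smul]
        rw [this, norm_smul, norm_norm]
        exact mul_lt_of_lt_one_right h0 h
      have hc : Continuous fun v' => (e v' : X) := by fun_prop
      filter_upwards [(hc.sub continuous_const).norm.continuousAt.eventually_lt hc.norm.continuousAt hlt] with v' hv' _
      exact hv'
    · refine ⟨0, ?_⟩
      filter_upwards [hK.isOpen_compl.mem_nhds hv] with v' hv' h
      exact absurd h hv')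
  have hjc : Continuous j := j.continuous_of_finiteDimensional
  obtain ⟨u, hu, h⟩ := borsuk_ulam (fun v => j (g v)) (by fun_prop)
  have hgu : g u = g (-u) := hj h
  have h1 := hg u hu
  have h2 := hg (-u) (by simpa [K] using hu)
  rw [← hgu] at h2
  simp only [map_neg, Submodule.coe_neg, norm_neg] at h2
  have h3 : ‖((e u : X) - g u) - (-(e u : X) - g u)‖ < 2 * ‖(e u : X)‖ := by
    refine (norm_sub_le _ _).trans_lt ?_
    linarith
  have h4 : ((e u : X) - g u) - (-(e u : X) - g u) = (2:ℝ) • (e u : X) := by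
    rw [two_smul]; abel
  rw [h4, norm_smul] at h3
  norm_num at h3

/-- If `M, N` are finite-dimensional (hence closed) subspaces of a Banach space `X`
with `dim M = dim N` and `δ(M,N) < 1`, then `δ(N,M) ≤ δ(M,N)/(1 - δ(M,N))`,
where `δ(M,N) = sup_{x ∈ M, ‖x‖=1} dist(x, N)`. -/
theorem stmt_0 {X : Type*} [NormedAddCommGroup X] [NormedSpace ℝ X] [CompleteSpace X]
    (M N : Submodule ℝ X) [FiniteDimensional ℝ M] [FiniteDimensional ℝ N]
    (hdim : Module.finrank ℝ M = Module.finrank ℝ N)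
    (δMN δNM : ℝ)
    (hδMN : δMN = sSup {d : ℝ | ∃ x ∈ M, ‖x‖ = 1 ∧ d = Metric.infDist x (N : Set X)})
    (hδNM : δNM = sSup {d : ℝ | ∃ x ∈ N, ‖x‖ = 1 ∧ d = Metric.infDist x (M : Set X)})
    (hlt : δMN < 1) :
    δNM ≤ δMN / (1 - δMN) := by
  have hnn : 0 ≤ δMN := by
    rw [hδMN]
    apply Real.sSup_nonneg
    rintro _ ⟨x, _, _, rfl⟩
    exact Metric.infDist_nonneg
  have hle : ∀ x ∈ M, ‖x‖ = 1 → Metric.infDist x (N : Set X) ≤ δMN := by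
    intro x hx hx1
    rw [hδMN]
    refine le_csSup ⟨1, ?_⟩ ⟨x, hx, hx1, rfl⟩
    rintro _ ⟨z, _, hz, rfl⟩
    refine (Metric.infDist_le_dist_of_mem N.zero_mem).trans ?_
    simp [hz]
  have hpos : 0 < 1 - δMN := by linarith
  rw [hδNM]
  refine Real.sSup_le ?_ (by positivity)
  rintro _ ⟨y, hy, hy1, rfl⟩
  have : IsClosed (M : Set X) := M.closed_of_finiteDimensional
  have hNc : IsClosed (N : Set X) := N.closed_of_finiteDimensional
  rcases eq_or_lt_of_le (Metric.infDist_nonneg (x := y) (s := (M : Set X))) with h0 | h0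
  · rw [← h0]; positivity
  set d := Metric.infDist y (M : Set X) with hd
  obtain ⟨g, hg1, hgy⟩ := exists_dual_vector'' ℝ (M.mkQ y)
  have hnorm : ‖M.mkQ y‖ = d := QuotientAddGroup.norm_mk (S := M.toAddSubgroup) y
  let φ : X →ₗ[ℝ] ℝ := g.toLinearMap ∘ₗ M.mkQ
  have hφM : ∀ x ∈ M, φ x = 0 := by
    intro x hx
    have : M.mkQ x = 0 := by simpa using hx
    show g (M.mkQ x) = 0
    rw [this, map_zero]
  have hφ : ∀ x, |φ x| ≤ ‖x‖ := by
    intro x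
    calc |φ x| = ‖g (M.mkQ x)‖ := rfl
      _ ≤ ‖g‖ * ‖M.mkQ x‖ := g.le_opNorm _
      _ ≤ 1 * ‖x‖ := by gcongr; exact Submodule.Quotient.norm_mk_le _ _
      _ = _ := one_mul _
  have hφy : φ y = d := by
    show g (M.mkQ y) = d
    rw [hgy, hnorm]; rfl
  let N0 : Submodule ℝ X := N ⊓ LinearMap.ker φ
  have hN0 : N0 < N := by
    refine lt_of_le_of_ne inf_le_left fun h => ?_
    have : y ∈ N0 := by rw [h]; exact hy
    have : φ y = 0 := this.2
    linarith
  have : FiniteDimensional ℝ N0 := Submodule.finiteDimensional_of_le hN0.le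
  obtain ⟨x, hx, hx1, hxN⟩ := kkm M N0 (by rw [hdim]; exact Submodule.finrank_lt_finrank_of_lt hN0)
  -- near-best approximation of x in N
  have hfin : ∀ η > 0, d * (1 - δMN - η) ≤ δMN + η := by
    intro η hη
    obtain ⟨z, hz, hxz⟩ := (Metric.infDist_lt_iff (x := x) (r := δMN + η) ⟨0, N.zero_mem⟩).1
      ((hle x hx hx1).trans_lt (by linarith))
    rw [dist_eq_norm] at hxz
    let a := φ z / d
    have had : a * d = φ z := div_mul_cancel₀ _ h0.ne'
    have h1 : |a| * d ≤ δMN + η := by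
      rw [← abs_of_pos h0, ← abs_mul, had]
      have : φ z = - φ (x - z) := by rw [map_sub, hφM x hx]; ring
      rw [this, abs_neg]
      exact (hφ _).trans hxz.le
    have h2 := hxN (z - a • y) ⟨N.sub_mem hz (N.smul_mem _ hy), by
      show φ (z - a • y) = 0
      rw [map_sub, map_smul, hφy, smul_eq_mul, had, sub_self]⟩
    have h3 : ‖x - (z - a • y)‖ ≤ ‖x - z‖ + |a| := by
      have : x - (z - a • y) = (x - z) + a • y := by abel
      rw [this]
      refine (norm_add_le _ _).trans ?_
      rw [norm_smul, hy1, mul_one, Real.norm_eq_abs]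
    have h4 : 1 - δMN - η ≤ |a| := by linarith
    calc _ ≤ d * |a| := by gcongr
      _ ≤ _ := by linarith
  rw [le_div_iff₀ hpos]
  refine le_of_forall_pos_le_add fun η hη => ?_
  have := hfin (η / (1 + d)) (by positivity)
  have h5 : η / (1 + d) * (1 + d) = η := by field_simp
  nlinarith
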